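/- Consider an n-server PIR scheme for a database of k records of R bits each, with n ≥ 2, R ≥ 1, and k ≥ ⌈R/(n−1)⌉ + 1. Then the download complexity D of the scheme satisfies (n−1)·D ≥ n·R, i.e., D is at least n/(n−1) times R. -/

import Mathlib

open scoped ENNReal

/-- An `n`-server PIR scheme for a database of `k` records of `R` bits each. -/
structure PIRScheme (n k R : ℕ) where
  /-- The query set for each server. -/
  Q : Fin n → Type
  /-- Each query set is finite. -/
  fintypeQ : ∀ r, Fintype (Q r)
  /-- The storage size (in bits) of each server. -/
  s : Fin n → ℕ
  /-- The encoding map of each server. -/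
  E : (r : Fin n) → (Fin k → Fin R → Bool) → (Fin (s r) → Bool)
  /-- For each record index `ℓ`, a probability distribution on query tuples. -/
  D : Fin k → PMF ((r : Fin n) → Q r)
  /-- The response length of each server on each query. -/
  d : (r : Fin n) → Q r → ℕ
  /-- The deterministic response map of each server. -/
  resp : (r : Fin n) → (q : Q r) → (Fin (s r) → Bool) → (Fin (d r q) → Bool)
  /-- The reconstruction function. -/
  recon : (ℓ : Fin k) → (q : (r : Fin n) → Q r) →
    ((r : Fin n) → (Fin (d r (q r)) → Bool)) → (Fin R → Bool)
  /-- Correctness. -/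
  correct : ∀ (X : Fin k → Fin R → Bool) (ℓ : Fin k) (q : (r : Fin n) → Q r),
    q ∈ (D ℓ).support →
    recon ℓ q (fun r => resp r (q r) (E r X)) = X ℓ
  /-- Privacy: the marginal of each query component does not depend on `ℓ`. -/
  privacy : ∀ (r : Fin n) (ℓ ℓ' : Fin k),
    (D ℓ).map (fun q => q r) = (D ℓ').map (fun q => q r)

attribute [instance] PIRScheme.fintypeQ

/-- A query tuple is possible if it lies in the support of `D ℓ` for some `ℓ`. -/
def PIRScheme.Possible {n k R : ℕ} (S : PIRScheme n k R)
    (q : (r : Fin n) → S.Q r) : Prop :=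
  ∃ ℓ, q ∈ (S.D ℓ).support

/-- The download complexity: the maximum, over possible query tuples, of the
total number of downloaded bits. -/
noncomputable def PIRScheme.downloadComplexity {n k R : ℕ} (S : PIRScheme n k R) : ℕ :=
  letI : DecidablePred S.Possible := Classical.decPred _
  (Finset.univ.filter S.Possible).sup (fun q => ∑ r, S.d r (q r))

/-!
Consider the set of responses a server can give to a fixed query as the database ranges over some
set. If this set has at most `2 ^ (d - m)` elements although `d` bits are transmitted, the server
wastes `m` bits. When a record `ℓ` is retrieved with such a query, the transcripts lose `m` bits as
well, and since they determine `X ℓ`, fixing a suitable value of `X ℓ` costs them `R` further bits.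
If `(n - 1) * D < n * R`, then some server contributes more than the total minus `R` bits, so on the
smaller set of databases it wastes at least `m + 1` bits. By privacy its query could equally well
have been asked in order to retrieve any other record, and the argument repeats until only one
record is left; retrieving it takes `R` bits in addition to the `k - 1` wasted ones.
-/

section Counting

open scoped Finset

variable {ι α γ : Type*}

theorem card_image_pi_le_prod_card_image {β : ι → Type*} [Fintype ι]
    [∀ i, DecidableEq (β i)] (s : Finset α) (f : ∀ i, α → β i) :
    #(s.image fun a i => f i a) ≤ ∏ i, #(s.image (f i)) := by
  classical
  rw [← Fintype.card_piFinset]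
  refine Finset.card_le_card (Finset.image_subset_iff.2 fun a ha => ?_)
  exact Fintype.mem_piFinset.2 fun i => Finset.mem_image_of_mem (f i) ha

theorem exists_card_image_filter_mul_card_le {β : Type*} [DecidableEq β] [Fintype γ] [Nonempty γ]
    [DecidableEq γ] (s : Finset α) {f : α → β} {g : β → γ} {h : α → γ}
    (hgf : ∀ a ∈ s, g (f a) = h a) :
    ∃ y, #({a ∈ s | h a = y}.image f) * Fintype.card γ ≤ #(s.image f) := by
  have fiber_eq (y : γ) : {a ∈ s | h a = y}.image f = {b ∈ s.image f | g b = y} := by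
    rw [Finset.filter_image]
    congr 1
    exact Finset.filter_congr fun a ha => by rw [hgf a ha]
  have card_eq : #(s.image f) = ∑ y, #({a ∈ s | h a = y}.image f) := by
    simp only [fiber_eq]
    exact Finset.card_eq_sum_card_fiberwise fun _ _ => Finset.mem_univ _
  obtain ⟨y, -, hy⟩ := Finset.exists_le_of_sum_le Finset.univ_nonempty
    (f := fun y => #({a ∈ s | h a = y}.image f) * Fintype.card γ) (g := fun _ => #(s.image f))
    (by rw [← Finset.sum_mul, ← card_eq, Finset.sum_const, Finset.card_univ, smul_eq_mul, mul_comm])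
  exact ⟨y, hy⟩

theorem exists_sum_lt_add [Fintype ι] {a : ι → ℕ} {b : ℕ}
    (h : (Fintype.card ι - 1) * ∑ i, a i < Fintype.card ι * b) : ∃ i, ∑ j, a j < a i + b := by
  have card_pos : 1 ≤ Fintype.card ι := by
    by_contra! hc
    simp [Nat.lt_one_iff.1 hc] at h
  have sum_lt : ∑ _i : ι, ∑ j, a j < ∑ i, (a i + b) := by
    simp only [Finset.sum_add_distrib, Finset.sum_const, Finset.card_univ, smul_eq_mul]
    calc Fintype.card ι * ∑ i, a i
        = ∑ i, a i + (Fintype.card ι - 1) * ∑ i, a i := by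
          rw [← one_add_mul, Nat.add_sub_cancel' card_pos]
      _ < ∑ i, a i + Fintype.card ι * b := Nat.add_lt_add_left h _
  obtain ⟨i, -, hi⟩ := Finset.exists_lt_of_sum_lt sum_lt
  exact ⟨i, hi⟩

theorem add_one_mul_le_mul_add_of_ceilDiv_le {a b c : ℕ} (ha : 0 < a) (h : b ⌈/⌉ a ≤ c) :
    (a + 1) * b ≤ a * (b + c) := by
  rw [add_one_mul, mul_add]
  exact Nat.add_le_add_left ((ceilDiv_le_iff_le_mul ha).1 h) _

/-- The cylinder of all families that agree with `x` on the coordinates in `I`. -/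
def agreeingOn [Fintype ι] [DecidableEq ι] [Fintype α] [DecidableEq α] (I : Finset ι) (x : ι → α) :
    Finset (ι → α) :=
  {X | ∀ i ∈ I, X i = x i}

variable [Fintype ι] [DecidableEq ι] [Fintype α] [DecidableEq α]

theorem mem_agreeingOn {I : Finset ι} {x X : ι → α} :
    X ∈ agreeingOn I x ↔ ∀ i ∈ I, X i = x i := by
  simp only [agreeingOn, Finset.mem_filter, Finset.mem_univ, true_and]

theorem agreeingOn_nonempty (I : Finset ι) (x : ι → α) : (agreeingOn I x).Nonempty :=
  ⟨x, mem_agreeingOn.2 fun _ _ => rfl⟩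

theorem agreeingOn_insert_update {I : Finset ι} {i : ι} (hi : i ∉ I) (x : ι → α) (y : α) :
    agreeingOn (insert i I) (Function.update x i y) = {X ∈ agreeingOn I x | X i = y} := by
  have update_eq : ∀ j ∈ I, Function.update x i y j = x j := fun j hj =>
    Function.update_of_ne (ne_of_mem_of_not_mem hj hi) y x
  ext X
  simp +contextual only [Finset.mem_filter, mem_agreeingOn, Finset.forall_mem_insert,
    Function.update_self, update_eq, and_comm]

end Counting

namespace PIRScheme

open scoped Finset

variable {n k R : ℕ} (S : PIRScheme n k R)

/-- The response of server `r` to the query `q`, as a function of the database. -/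
def response (r : Fin n) (q : S.Q r) (X : Fin k → Fin R → Bool) : Fin (S.d r q) → Bool :=
  S.resp r q (S.E r X)

/-- The tuple of all responses to the query tuple `q`, as a function of the database. -/
def transcript (q : ∀ r, S.Q r) (X : Fin k → Fin R → Bool) (r : Fin n) : Fin (S.d r (q r)) → Bool :=
  S.response r (q r) X

variable {S}

theorem sum_length_le_downloadComplexity {q : ∀ r, S.Q r} (hq : S.Possible q) :
    ∑ r, S.d r (q r) ≤ S.downloadComplexity := by
  classical
  exact Finset.le_sup (f := fun q : ∀ r, S.Q r => ∑ r, S.d r (q r))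
    (Finset.mem_filter.2 ⟨Finset.mem_univ q, hq⟩)

theorem exists_mem_support_apply_eq {ℓ : Fin k} {q : ∀ r, S.Q r} (hq : q ∈ (S.D ℓ).support)
    (r : Fin n) (ℓ' : Fin k) : ∃ q' ∈ (S.D ℓ').support, q' r = q r := by
  rw [← Set.mem_image, ← PMF.support_map, ← S.privacy r ℓ ℓ', PMF.support_map]
  exact Set.mem_image_of_mem _ hq

theorem card_image_response_le (𝒳 : Finset (Fin k → Fin R → Bool)) (r : Fin n) (q : S.Q r) :
    #(𝒳.image (S.response r q)) ≤ 2 ^ S.d r q := by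
  simpa using Finset.card_le_univ (𝒳.image (S.response r q))

theorem card_image_response_le_card_image_transcript (𝒳 : Finset (Fin k → Fin R → Bool))
    (q : ∀ r, S.Q r) (r : Fin n) :
    #(𝒳.image (S.response r (q r))) ≤ #(𝒳.image (S.transcript q)) := by
  have image_eq : 𝒳.image (S.response r (q r)) = (𝒳.image (S.transcript q)).image (· r) := by
    rw [Finset.image_image]
    rfl
  exact image_eq ▸ Finset.card_image_le

theorem card_image_transcript_mul_le {𝒳 : Finset (Fin k → Fin R → Bool)} {q : ∀ r, S.Q r}
    {r : Fin n} {c : ℕ} (h : #(𝒳.image (S.response r (q r))) * c ≤ 2 ^ S.d r (q r)) :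
    #(𝒳.image (S.transcript q)) * c ≤ 2 ^ ∑ r, S.d r (q r) := by
  let N (r : Fin n) : ℕ := #(𝒳.image (S.response r (q r)))
  calc #(𝒳.image (S.transcript q)) * c
      ≤ (∏ r, N r) * c := Nat.mul_le_mul_right c (card_image_pi_le_prod_card_image 𝒳 _)
    _ = N r * c * ∏ r' ∈ Finset.univ.erase r, N r' := by
        rw [← Finset.mul_prod_erase _ _ (Finset.mem_univ r), mul_right_comm]
    _ ≤ 2 ^ S.d r (q r) * ∏ r' ∈ Finset.univ.erase r, 2 ^ S.d r' (q r') :=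
        Nat.mul_le_mul h (Finset.prod_le_prod' fun r' _ => card_image_response_le 𝒳 r' (q r'))
    _ = 2 ^ ∑ r, S.d r (q r) := by
        rw [Finset.mul_prod_erase _ (fun r => 2 ^ S.d r (q r)) (Finset.mem_univ r),
          Finset.prod_pow_eq_pow_sum]

theorem exists_record_card_image_transcript_mul_le {ℓ : Fin k} {q : ∀ r, S.Q r}
    (hq : q ∈ (S.D ℓ).support) (𝒳 : Finset (Fin k → Fin R → Bool)) :
    ∃ y, #({X ∈ 𝒳 | X ℓ = y}.image (S.transcript q)) * 2 ^ R ≤ #(𝒳.image (S.transcript q)) := by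
  simpa using exists_card_image_filter_mul_card_le 𝒳 (f := S.transcript q) (g := S.recon ℓ q)
    (h := fun X => X ℓ) fun X _ => S.correct X ℓ q hq

theorem exists_agreeingOn_insert_card_mul_le {I : Finset (Fin k)} {ℓ : Fin k} (hℓ : ℓ ∉ I)
    {q : ∀ r, S.Q r} (hq : q ∈ (S.D ℓ).support) {x : Fin k → Fin R → Bool} {r : Fin n} {m : ℕ}
    (h : #((agreeingOn I x).image (S.response r (q r))) * 2 ^ m ≤ 2 ^ S.d r (q r)) :
    ∃ x', #((agreeingOn (insert ℓ I) x').image (S.transcript q)) * 2 ^ (R + m) ≤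
      2 ^ ∑ r, S.d r (q r) := by
  obtain ⟨y, hy⟩ := exists_record_card_image_transcript_mul_le hq (agreeingOn I x)
  refine ⟨Function.update x ℓ y, ?_⟩
  rw [agreeingOn_insert_update hℓ, pow_add, ← mul_assoc]
  exact (Nat.mul_le_mul_right _ hy).trans (card_image_transcript_mul_le h)

theorem card_image_response_mul_two_pow_succ_le {𝒳 : Finset (Fin k → Fin R → Bool)}
    {q : ∀ r, S.Q r} {r : Fin n} {m : ℕ}
    (h : #(𝒳.image (S.transcript q)) * 2 ^ (R + m) ≤ 2 ^ ∑ r, S.d r (q r))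
    (hr : ∑ r, S.d r (q r) < S.d r (q r) + R) :
    #(𝒳.image (S.response r (q r))) * 2 ^ (m + 1) ≤ 2 ^ S.d r (q r) := by
  refine Nat.le_of_mul_le_mul_right ?_ (Nat.two_pow_pos R)
  calc #(𝒳.image (S.response r (q r))) * 2 ^ (m + 1) * 2 ^ R
      = #(𝒳.image (S.response r (q r))) * 2 ^ (R + m) * 2 := by ring
    _ ≤ 2 ^ (∑ r, S.d r (q r)) * 2 := by
        gcongr
        exact (Nat.mul_le_mul_right _
          (card_image_response_le_card_image_transcript 𝒳 q r)).trans h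
    _ = 2 ^ (∑ r, S.d r (q r) + 1) := (pow_succ _ _).symm
    _ ≤ 2 ^ (S.d r (q r) + R) := Nat.pow_le_pow_right two_pos hr
    _ = 2 ^ S.d r (q r) * 2 ^ R := pow_add _ _ _

theorem exists_sum_length_lt_length_add (hD : (n - 1) * S.downloadComplexity < n * R)
    {q : ∀ r, S.Q r} (hq : S.Possible q) : ∃ r, ∑ r', S.d r' (q r') < S.d r (q r) + R := by
  apply exists_sum_lt_add
  rw [Fintype.card_fin]
  exact (Nat.mul_le_mul_left _ (sum_length_le_downloadComplexity hq)).trans_lt hD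

theorem exists_card_image_response_mul_two_pow_card_le
    (hD : (n - 1) * S.downloadComplexity < n * R) (I : Finset (Fin k)) (ℓ : Fin k) :
    ∃ x r, ∃ q ∈ (S.D ℓ).support,
      #((agreeingOn I x).image (S.response r (q r))) * 2 ^ #I ≤ 2 ^ S.d r (q r) := by
  induction I using Finset.induction_on generalizing ℓ with
  | empty =>
    obtain ⟨q, hq⟩ := (S.D ℓ).support_nonempty
    obtain ⟨r, -⟩ := exists_sum_length_lt_length_add hD ⟨ℓ, hq⟩
    exact ⟨fun _ _ => false, r, q, hq, by simpa using card_image_response_le _ r (q r)⟩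
  | insert i I hi ih =>
    obtain ⟨x, r, q, hq, hx⟩ := ih i
    obtain ⟨x', hx'⟩ := exists_agreeingOn_insert_card_mul_le hi hq hx
    obtain ⟨r', hr'⟩ := exists_sum_length_lt_length_add hD ⟨i, hq⟩
    obtain ⟨q', hq', hqr'⟩ := exists_mem_support_apply_eq hq r' ℓ
    refine ⟨x', r', q', hq', ?_⟩
    rw [hqr', Finset.card_insert_of_notMem hi]
    exact card_image_response_mul_two_pow_succ_le hx' hr'

end PIRScheme

theorem download_complexity_n_servers_general {n k R : ℕ} (hk : 0 < k) (S : PIRScheme n k R) :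
    n * R ≤ (n - 1) * S.downloadComplexity ∨ R + (k - 1) ≤ S.downloadComplexity := by
  refine or_iff_not_imp_left.2 fun hD => ?_
  let ℓ : Fin k := ⟨0, hk⟩
  obtain ⟨x, r, q, hq, hx⟩ := PIRScheme.exists_card_image_response_mul_two_pow_card_le
    (not_le.1 hD) (Finset.univ.erase ℓ) ℓ
  obtain ⟨x', hx'⟩ :=
    PIRScheme.exists_agreeingOn_insert_card_mul_le (Finset.notMem_erase ℓ _) hq hx
  rw [Finset.card_erase_of_mem (Finset.mem_univ ℓ), Finset.card_univ, Fintype.card_fin] at hx'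
  have le_length : R + (k - 1) ≤ ∑ r, S.d r (q r) :=
    (Nat.pow_le_pow_iff_right one_lt_two).1 <|
      (Nat.le_mul_of_pos_left _ ((agreeingOn_nonempty _ x').image _).card_pos).trans hx'
  exact le_length.trans (PIRScheme.sum_length_le_downloadComplexity ⟨ℓ, hq⟩)

/-- Theorem 4 of the paper. An `n`-server PIR scheme with `n ≥ 2`,
`R ≥ 1` and `k ≥ ⌈R/(n-1)⌉ + 1` has download complexity `D` with `(n-1)·D ≥ n·R`. -/
theorem download_complexity_n_servers (n k R : ℕ) (hn : 2 ≤ n) (hR : 1 ≤ R)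
    (hk : (R + n - 2) / (n - 1) + 1 ≤ k) (S : PIRScheme n k R) :
    n * R ≤ (n - 1) * S.downloadComplexity := by
  have ceil_le : R ⌈/⌉ (n - 1) ≤ k - 1 := by
    rw [Nat.ceilDiv_eq_add_pred_div, show R + (n - 1) - 1 = R + n - 2 by omega]
    exact Nat.le_sub_one_of_lt hk
  have mul_le := add_one_mul_le_mul_add_of_ceilDiv_le (Nat.sub_pos_of_lt hn) ceil_le
  rw [Nat.sub_add_cancel (Nat.one_le_of_lt hn)] at mul_le
  exact (download_complexity_n_servers_general (Nat.zero_lt_of_lt hk) S).elim id fun le_D =>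
    mul_le.trans (Nat.mul_le_mul_left _ le_D)
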